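/- Let f : ℝ → ℝ be differentiable and strictly convex on all of ℝ, let n p : ℝ satisfy deriv f n < 0 and deriv f p > 0, let w be the unique point in (n, p) with deriv f w = 0, and let a b : ℕ → ℝ be the bisection sequences with a 0 = n, b 0 = p, and for each k, letting m = (a k + b k)/2: if deriv f m ≤ 0 then a (k+1) = m and b (k+1) = b k, else a (k+1) = a k and b (k+1) = m. Then the sequences a and b both converge to w, and the sequence of function values f((a k + b k)/2) converges to f w, which equals the global minimum value of f. -/

import Mathlib

/-!
For a convex function the derivative is monotone, so at a point `x` of the search interval the test
`deriv f x ≤ 0` decides on which side of the largest critical point `w` the point `x` lies. Hence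
`w` is never discarded by the bisection, and the width of the bracketing interval halves at each
step. When there are several critical points, keeping the right half on equality is what selects
the largest one.
-/

open Filter Set Topology

section Bisection

variable {𝕜 : Type*} [Field 𝕜] [LinearOrder 𝕜]

/-- `IsBisection P a b` says that `a` and `b` are the left and right endpoints of the intervals
produced by bisection with test `P`: the right half of the interval is kept if the midpoint
satisfies `P`, and the left half otherwise. The initial interval is `[a 0, b 0]`. -/
def IsBisection (P : 𝕜 → Prop) [DecidablePred P] (a b : ℕ → 𝕜) : Prop :=
  ∀ k, if P ((a k + b k) / 2)
    then a (k + 1) = (a k + b k) / 2 ∧ b (k + 1) = b k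
    else a (k + 1) = a k ∧ b (k + 1) = (a k + b k) / 2

namespace IsBisection

variable [IsStrictOrderedRing 𝕜] {P : 𝕜 → Prop} [DecidablePred P] {a b : ℕ → 𝕜} {w : 𝕜}

lemma right_sub_left (h : IsBisection P a b) (k : ℕ) :
    b k - a k = (b 0 - a 0) * (1 / 2) ^ k := by
  induction k with
  | zero => simp
  | succ k ih =>
    have hk := h k
    split_ifs at hk <;> (rw [hk.1, hk.2, pow_succ]; linarith)

lemma left_lt_right (h : IsBisection P a b) (hab : a 0 < b 0) (k : ℕ) : a k < b k := by
  have hwidth : 0 < (b 0 - a 0) * (1 / 2) ^ k := mul_pos (sub_pos.2 hab) (by positivity)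
  rwa [← h.right_sub_left, sub_pos] at hwidth

lemma monotone_left (h : IsBisection P a b) (hab : a 0 < b 0) : Monotone a := by
  refine monotone_nat_of_le_succ fun k ↦ ?_
  have hk := h k
  have hlt := h.left_lt_right hab k
  split_ifs at hk <;> linarith

lemma antitone_right (h : IsBisection P a b) (hab : a 0 < b 0) : Antitone b := by
  refine antitone_nat_of_succ_le fun k ↦ ?_
  have hk := h k
  have hlt := h.left_lt_right hab k
  split_ifs at hk <;> linarith

lemma midpoint_mem_Ioo (h : IsBisection P a b) (hab : a 0 < b 0) (k : ℕ) :
    (a k + b k) / 2 ∈ Ioo (a 0) (b 0) :=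
  ⟨(h.monotone_left hab k.zero_le).trans_lt (left_lt_add_div_two.2 (h.left_lt_right hab k)),
    (add_div_two_lt_right.2 (h.left_lt_right hab k)).trans_le (h.antitone_right hab k.zero_le)⟩

lemma left_le (h : IsBisection P a b) (hab : a 0 < b 0) (haw : a 0 ≤ w)
    (hP : ∀ x ∈ Ioo (a 0) (b 0), P x → x ≤ w) (k : ℕ) : a k ≤ w := by
  induction k with
  | zero => exact haw
  | succ k ih =>
    have hk := h k
    split_ifs at hk with hmid
    · exact hk.1.trans_le (hP _ (h.midpoint_mem_Ioo hab k) hmid)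
    · exact hk.1.trans_le ih

lemma le_right (h : IsBisection P a b) (hab : a 0 < b 0) (hwb : w ≤ b 0)
    (hP : ∀ x ∈ Ioo (a 0) (b 0), ¬ P x → w ≤ x) (k : ℕ) : w ≤ b k := by
  induction k with
  | zero => exact hwb
  | succ k ih =>
    have hk := h k
    split_ifs at hk with hmid
    · exact ih.trans_eq hk.2.symm
    · exact (hP _ (h.midpoint_mem_Ioo hab k) hmid).trans_eq hk.2.symm

variable [Archimedean 𝕜] [TopologicalSpace 𝕜] [OrderTopology 𝕜]

lemma tendsto_right_sub_left (h : IsBisection P a b) :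
    Tendsto (fun k ↦ b k - a k) atTop (𝓝 0) := by
  have hpow : Tendsto (fun k : ℕ ↦ (1 / 2 : 𝕜) ^ k) atTop (𝓝 0) :=
    tendsto_pow_atTop_nhds_zero_of_lt_one one_half_pos.le one_half_lt_one
  rw [funext h.right_sub_left]
  simpa only [mul_zero] using hpow.const_mul (b 0 - a 0)

theorem tendsto_left (h : IsBisection P a b) (hle : ∀ k, a k ≤ w) (hge : ∀ k, w ≤ b k) :
    Tendsto a atTop (𝓝 w) := by
  have hlower : Tendsto (fun k ↦ w - (b k - a k)) atTop (𝓝 w) := by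
    simpa only [sub_zero] using h.tendsto_right_sub_left.const_sub w
  exact tendsto_of_tendsto_of_tendsto_of_le_of_le hlower tendsto_const_nhds
    (fun k ↦ by linarith [hge k]) hle

theorem tendsto_right (h : IsBisection P a b) (hle : ∀ k, a k ≤ w) (hge : ∀ k, w ≤ b k) :
    Tendsto b atTop (𝓝 w) := by
  simpa only [sub_add_cancel, zero_add] using
    h.tendsto_right_sub_left.add (h.tendsto_left hle hge)

theorem tendsto_midpoint (h : IsBisection P a b) (hle : ∀ k, a k ≤ w) (hge : ∀ k, w ≤ b k) :
    Tendsto (fun k ↦ (a k + b k) / 2) atTop (𝓝 w) := by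
  simpa only [add_self_div_two] using
    ((h.tendsto_left hle hge).add (h.tendsto_right hle hge)).div_const 2

end IsBisection

end Bisection

lemma apply_le_apply_iff_of_monotoneOn_of_forall_eq_le {α β : Type*} [LinearOrder α]
    [PartialOrder β] {g : α → β} {s : Set α} {w x : α} (hg : MonotoneOn g s) (hw : w ∈ s)
    (hmax : ∀ y ∈ s, g y = g w → y ≤ w) (hx : x ∈ s) : g x ≤ g w ↔ x ≤ w := by
  refine ⟨fun hle ↦ ?_, hg hx hw⟩
  by_contra! hlt
  exact hlt.not_ge (hmax x hx (hle.antisymm (hg hw hx hlt.le)))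

lemma isMinOn_of_convexOn_of_deriv_eq_zero {f : ℝ → ℝ} {s : Set ℝ} {w : ℝ}
    (hf : ConvexOn ℝ s f) (hw : w ∈ interior s) (hfw : DifferentiableAt ℝ f w)
    (hw0 : deriv f w = 0) : IsMinOn f s w :=
  hf.isMinOn_of_rightDeriv_eq_zero hw
    ((hfw.derivWithin (uniqueDiffWithinAt_Ioi w)).trans hw0)

theorem bisection_converges_to_optimum_general {f : ℝ → ℝ} {s : Set ℝ} {a b : ℕ → ℝ} {w : ℝ}
    (hconv : ConvexOn ℝ s f) (hs : Ioo (a 0) (b 0) ⊆ s)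
    (hf : ∀ x ∈ Ioo (a 0) (b 0), DifferentiableAt ℝ f x)
    (h : IsBisection (fun x ↦ deriv f x ≤ 0) a b)
    (hw : w ∈ Ioo (a 0) (b 0)) (hw0 : deriv f w = 0)
    (hmax : ∀ x ∈ Ioo (a 0) (b 0), deriv f x = 0 → x ≤ w) :
    Tendsto a atTop (𝓝 w) ∧ Tendsto b atTop (𝓝 w) ∧
      Tendsto (fun k ↦ f ((a k + b k) / 2)) atTop (𝓝 (f w)) ∧ IsMinOn f s w := by
  have hab : a 0 < b 0 := hw.1.trans hw.2
  have hmono : MonotoneOn (deriv f) (Ioo (a 0) (b 0)) :=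
    (hconv.subset hs (convex_Ioo _ _)).monotoneOn_deriv hf
  have htest : ∀ x ∈ Ioo (a 0) (b 0), deriv f x ≤ 0 ↔ x ≤ w := by
    rw [← hw0] at hmax ⊢
    exact fun x ↦ apply_le_apply_iff_of_monotoneOn_of_forall_eq_le hmono hw hmax
  have hle : ∀ k, a k ≤ w := h.left_le hab hw.1.le fun x hx ↦ (htest x hx).1
  have hge : ∀ k, w ≤ b k := h.le_right hab hw.2.le fun x hx hpos ↦
    (not_le.1 (mt (htest x hx).2 hpos)).le
  exact ⟨h.tendsto_left hle hge, h.tendsto_right hle hge,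
    (hf w hw).continuousAt.tendsto.comp (h.tendsto_midpoint hle hge),
    isMinOn_of_convexOn_of_deriv_eq_zero hconv (interior_maximal hs isOpen_Ioo hw) (hf w hw) hw0⟩

theorem bisection_converges_to_optimum
    (f : ℝ → ℝ) (hf : Differentiable ℝ f)
    (hconv : StrictConvexOn ℝ Set.univ f)
    (n p : ℝ) (hn : deriv f n < 0) (hp : deriv f p > 0)
    (a b : ℕ → ℝ) (ha0 : a 0 = n) (hb0 : b 0 = p)
    (hstep : ∀ k : ℕ,
      if deriv f ((a k + b k) / 2) ≤ 0
      then a (k + 1) = (a k + b k) / 2 ∧ b (k + 1) = b k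
      else a (k + 1) = a k ∧ b (k + 1) = (a k + b k) / 2)
    (w : ℝ) (hw : w ∈ Set.Ioo n p) (hw0 : deriv f w = 0)
    (hwu : ∀ w' : ℝ, w' ∈ Set.Ioo n p → deriv f w' = 0 → w' = w) :
    Filter.Tendsto a Filter.atTop (nhds w) ∧
    Filter.Tendsto b Filter.atTop (nhds w) ∧
    Filter.Tendsto (fun k => f ((a k + b k) / 2)) Filter.atTop (nhds (f w)) ∧
    ∀ y : ℝ, f w ≤ f y := by
  subst ha0 hb0
  simpa only [isMinOn_univ_iff] using
    bisection_converges_to_optimum_general hconv.convexOn (subset_univ _) (fun x _ ↦ hf x) hstep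
      hw hw0 fun x hx hx0 ↦ (hwu x hx hx0).le
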